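/- Assume n ≥ 2. Let G^i be a spray with coefficients N^i_j and let F̃ be a Finsler structure on U. Then the following are equivalent: (a) S is gyroscopic with respect to F̃, i.e. there exist smooth functions ω_{ij} : U → ℝ depending only on x, with ω_{ij} = −ω_{ji}, such that S(∂F̃/∂y^i) − ∂F̃/∂x^i = Σ_j ω_{ij}(x) y^j on Ω for all i; (b) the geodesic invariance condition ∇(∂²F̃/∂y^i∂y^j) = S(∂²F̃/∂y^i∂y^j) − Σ_k (N^k_i ∂²F̃/∂y^k∂y^j + N^k_j ∂²F̃/∂y^i∂y^k) = 0 holds on Ω for all i, j. -/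

import Mathlib

noncomputable section

/-- A point `(x, y)` of the tangent space coordinates over `ℝⁿ`. -/
abbrev Pt (n : ℕ) : Type := (Fin n → ℝ) × (Fin n → ℝ)

/-- `Ω = U × (ℝⁿ \ {0})`. -/
def OmegaSet {n : ℕ} (U : Set (Fin n → ℝ)) : Set (Pt n) :=
  {p : Pt n | p.1 ∈ U ∧ p.2 ≠ 0}

/-- Partial derivative `∂f/∂x^i`. -/
def pdx {n : ℕ} (f : Pt n → ℝ) (i : Fin n) (p : Pt n) : ℝ :=
  fderiv ℝ f p (Pi.single i 1, 0)

/-- Partial derivative `∂f/∂y^i`. -/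
def pdy {n : ℕ} (f : Pt n → ℝ) (i : Fin n) (p : Pt n) : ℝ :=
  fderiv ℝ f p (0, Pi.single i 1)

/-- Second fibre derivative `∂²f/∂y^i∂y^j`. -/
def pdyy {n : ℕ} (f : Pt n → ℝ) (i j : Fin n) : Pt n → ℝ :=
  pdy (pdy f j) i

/-- The spray vector field applied to a function:
`S(f) = Σ_k (y^k ∂f/∂x^k − 2 G^k ∂f/∂y^k)`. -/
def Sop {n : ℕ} (G : Fin n → Pt n → ℝ) (f : Pt n → ℝ) (p : Pt n) : ℝ :=
  ∑ k, (p.2 k * pdx f k p - 2 * G k p * pdy f k p)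

/-- Connection coefficients `N^i_j = ∂G^i/∂y^j`. -/
def Ncoef {n : ℕ} (G : Fin n → Pt n → ℝ) (i j : Fin n) : Pt n → ℝ :=
  pdy (G i) j

/-- Horizontal derivative `δf/δx^i = ∂f/∂x^i − Σ_j N^j_i ∂f/∂y^j`. -/
def deltax {n : ℕ} (G : Fin n → Pt n → ℝ) (f : Pt n → ℝ) (i : Fin n) (p : Pt n) : ℝ :=
  pdx f i p - ∑ j, Ncoef G j i p * pdy f j p

/-- Dynamical covariant derivative of a `(0,2)` family:
`∇T_{ij} = S(T_{ij}) − Σ_k (N^k_i T_{kj} + N^k_j T_{ik})`. -/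
def nablaT {n : ℕ} (G : Fin n → Pt n → ℝ) (T : Fin n → Fin n → Pt n → ℝ)
    (i j : Fin n) (p : Pt n) : ℝ :=
  Sop G (T i j) p - ∑ k, (Ncoef G k i p * T k j p + Ncoef G k j p * T i k p)

/-- `f` is positively `k`-homogeneous in the fibre variable `y`, on `Ω`. -/
def PosHomog {n : ℕ} (U : Set (Fin n → ℝ)) (k : ℤ) (f : Pt n → ℝ) : Prop :=
  ∀ L : ℝ, 0 < L → ∀ p ∈ OmegaSet U, f (p.1, L • p.2) = L ^ k * f p

/-- A spray: smooth, positively 2-homogeneous coefficients `G^i`. -/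
def IsSpray {n : ℕ} (U : Set (Fin n → ℝ)) (G : Fin n → Pt n → ℝ) : Prop :=
  ∀ i, ContDiffOn ℝ (⊤ : ℕ∞) (G i) (OmegaSet U) ∧ PosHomog U 2 (G i)

/-- Components of the Euler-Lagrange 1-form: `(δ_S f)_i = S(∂f/∂y^i) − ∂f/∂x^i`. -/
def EL {n : ℕ} (G : Fin n → Pt n → ℝ) (f : Pt n → ℝ) (i : Fin n) (p : Pt n) : ℝ :=
  Sop G (pdy f i) p - pdx f i p

/-- The metric tensor `g_{ij} = ½ ∂²(F²)/∂y^i∂y^j` of a Finsler function. -/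
def metricTensor {n : ℕ} (F : Pt n → ℝ) (i j : Fin n) (p : Pt n) : ℝ :=
  (1 / 2) * pdyy (fun q => F q ^ 2) i j p

/-- A Finsler structure on `U`: smooth, positive, positively 1-homogeneous,
with invertible metric tensor at every point of `Ω`. -/
def IsFinsler {n : ℕ} (U : Set (Fin n → ℝ)) (F : Pt n → ℝ) : Prop :=
  ContDiffOn ℝ (⊤ : ℕ∞) F (OmegaSet U) ∧ (∀ p ∈ OmegaSet U, 0 < F p) ∧ PosHomog U 1 F ∧
    ∀ p ∈ OmegaSet U, IsUnit (Matrix.of (fun i j => metricTensor F i j p))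

/-!
Write `E_i` for the Euler-Lagrange components `S(∂F̃/∂y^i) - ∂F̃/∂x^i`. Commuting `∂/∂y^j` past `S`
gives `∂E_i/∂y^j + ∂E_j/∂y^i = 2 ∇(∂²F̃/∂y^i∂y^j)`, so geodesic invariance says exactly that the
fibre Jacobian `∂E_i/∂y^j` is skew. If `E_i = Σ_j ω_{ij}(x) y^j`, this Jacobian is `ω`.
Conversely, `∂²E_i/∂y^j∂y^k` is then skew in `i, j` and symmetric in `j, k`, hence zero; for `n ≥ 2`
the fibres of `Ω` are connected, so the Jacobian depends on `x` only (for `n = 1` a skew Jacobian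
is zero), and Euler's identity for the 1-homogeneous `E_i` recovers `E_i = Σ_j ω_{ij}(x) y^j`.
-/

section General

lemma eq_zero_of_skew_of_symm {ι M : Type*} [AddCommGroup M] [IsAddTorsionFree M]
    {T : ι → ι → ι → M} (skew : ∀ i j k, T i j k = -T j i k) (symm : ∀ i j k, T i j k = T i k j)
    (i j k : ι) : T i j k = 0 := by
  refine self_eq_neg.mp ?_
  calc T i j k = -T j k i := by rw [skew, symm]
    _ = T k i j := by rw [skew, neg_neg, symm]
    _ = -T i j k := by rw [skew, symm]

lemma fderiv_fderiv_apply_comm {𝕜 E F : Type*} [NontriviallyNormedField 𝕜]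
    [NormedAddCommGroup E] [NormedSpace 𝕜 E] [NormedAddCommGroup F] [NormedSpace 𝕜 F]
    {f : E → F} {x : E} {m : WithTop ℕ∞} (hf : ContDiffAt 𝕜 m f x) (hm : minSmoothness 𝕜 2 ≤ m)
    (u v : E) :
    fderiv 𝕜 (fun q => fderiv 𝕜 f q u) x v = fderiv 𝕜 (fun q => fderiv 𝕜 f q v) x u := by
  have hdiff : DifferentiableAt 𝕜 (fderiv 𝕜 f) x :=
    (hf.fderiv_right (m := 1) (le_minSmoothness.trans hm)).differentiableAt one_ne_zero
  rw [fderiv_clm_apply hdiff (differentiableAt_const u),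
    fderiv_clm_apply hdiff (differentiableAt_const v)]
  simpa using hf.isSymmSndFDerivAt hm v u

end General

section PartialDerivatives

variable {n : ℕ} {f g : Pt n → ℝ} {p : Pt n}

lemma fderiv_fibre_apply (f : Pt n → ℝ) (p : Pt n) (v : Fin n → ℝ) :
    fderiv ℝ f p (0, v) = ∑ j, pdy f j p * v j := by
  have hv : ((0, v) : Pt n) = ∑ j, v j • ((0, Pi.single j 1) : Pt n) := by
    simpa [map_sum] using
      congrArg (LinearMap.inr ℝ (Fin n → ℝ) (Fin n → ℝ)) (pi_eq_sum_univ' v)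
  simp only [hv, map_sum, map_smul, smul_eq_mul, pdy, mul_comm]

lemma hasFDerivAt_fibre (hf : DifferentiableAt ℝ f p) :
    HasFDerivAt (fun y => f (p.1, y))
      ((fderiv ℝ f p).comp (ContinuousLinearMap.inr ℝ (Fin n → ℝ) (Fin n → ℝ))) p.2 :=
  hf.hasFDerivAt.comp p.2 (hasFDerivAt_prodMk_right p.1 p.2)

lemma contDiffAt_pdx {m k : WithTop ℕ∞} (hf : ContDiffAt ℝ k f p) (hmk : m + 1 ≤ k)
    (i : Fin n) : ContDiffAt ℝ m (pdx f i) p :=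
  (hf.fderiv_right hmk).clm_apply contDiffAt_const

lemma contDiffAt_pdy {m k : WithTop ℕ∞} (hf : ContDiffAt ℝ k f p) (hmk : m + 1 ≤ k)
    (i : Fin n) : ContDiffAt ℝ m (pdy f i) p :=
  (hf.fderiv_right hmk).clm_apply contDiffAt_const

lemma pdy_pdx_comm (hf : ContDiffAt ℝ 2 f p) (i j : Fin n) :
    pdy (pdx f i) j p = pdx (pdy f j) i p :=
  fderiv_fderiv_apply_comm hf (by simp) _ _

lemma pdy_pdy_comm (hf : ContDiffAt ℝ 2 f p) (i j : Fin n) :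
    pdy (pdy f i) j p = pdy (pdy f j) i p :=
  fderiv_fderiv_apply_comm hf (by simp) _ _

lemma pdy_snd_apply (j k : Fin n) (p : Pt n) :
    pdy (fun q : Pt n => q.2 k) j p = (Pi.single j 1 : Fin n → ℝ) k := by
  have h : HasFDerivAt (fun q : Pt n => q.2 k)
      ((ContinuousLinearMap.proj k).comp (ContinuousLinearMap.snd ℝ (Fin n → ℝ) (Fin n → ℝ))) p :=
    ContinuousLinearMap.hasFDerivAt
      ((ContinuousLinearMap.proj (R := ℝ) (φ := fun _ : Fin n => ℝ) k).comp
        (ContinuousLinearMap.snd ℝ (Fin n → ℝ) (Fin n → ℝ)))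
  simp [pdy, h.fderiv]

lemma pdy_sub (hf : DifferentiableAt ℝ f p) (hg : DifferentiableAt ℝ g p) (j : Fin n) :
    pdy (fun q => f q - g q) j p = pdy f j p - pdy g j p := by
  simp [pdy, fderiv_fun_sub hf hg]

lemma pdy_mul (hf : DifferentiableAt ℝ f p) (hg : DifferentiableAt ℝ g p) (j : Fin n) :
    pdy (fun q => f q * g q) j p = f p * pdy g j p + g p * pdy f j p := by
  simp [pdy, fderiv_fun_mul hf hg]

lemma pdy_const_mul (c : ℝ) (hf : DifferentiableAt ℝ f p) (j : Fin n) :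
    pdy (fun q => c * f q) j p = c * pdy f j p := by
  simp [pdy, fderiv_const_mul hf]

lemma pdy_sum {ι : Type*} {s : Finset ι} {h : ι → Pt n → ℝ}
    (hh : ∀ k ∈ s, DifferentiableAt ℝ (h k) p) (j : Fin n) :
    pdy (fun q => ∑ k ∈ s, h k q) j p = ∑ k ∈ s, pdy (h k) j p := by
  simp [pdy, fderiv_fun_sum hh]

end PartialDerivatives

section EulerLagrange

variable {n : ℕ} {G : Fin n → Pt n → ℝ} {f g : Pt n → ℝ} {p : Pt n}

lemma contDiffAt_sop {m k : WithTop ℕ∞} (hG : ∀ i, ContDiffAt ℝ m (G i) p)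
    (hf : ContDiffAt ℝ k f p) (hmk : m + 1 ≤ k) : ContDiffAt ℝ m (Sop G f) p := by
  refine ContDiffAt.sum fun i _ => ContDiffAt.sub (ContDiffAt.mul ?_ (contDiffAt_pdx hf hmk i))
    ((contDiffAt_const.mul (hG i)).mul (contDiffAt_pdy hf hmk i))
  fun_prop

lemma contDiffAt_el {m k : WithTop ℕ∞} (hG : ∀ i, ContDiffAt ℝ m (G i) p)
    (hf : ContDiffAt ℝ k f p) (hmk : m + 1 + 1 ≤ k) (i : Fin n) :
    ContDiffAt ℝ m (EL G f i) p :=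
  (contDiffAt_sop hG (contDiffAt_pdy hf hmk i) le_rfl).sub
    (contDiffAt_pdx hf (le_self_add.trans hmk) i)

lemma sop_congr (h : f =ᶠ[nhds p] g) : Sop G f p = Sop G g p := by
  simp only [Sop, pdx, pdy, h.fderiv_eq]

lemma pdy_sop (hG : ∀ k, DifferentiableAt ℝ (G k) p) (hf : ContDiffAt ℝ 2 f p) (j : Fin n) :
    pdy (Sop G f) j p = Sop G (pdy f j) p + pdx f j p - 2 * ∑ k, Ncoef G k j p * pdy f k p := by
  have hy (k : Fin n) : DifferentiableAt ℝ (fun q : Pt n => q.2 k) p := by fun_prop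
  have hx (k : Fin n) : DifferentiableAt ℝ (pdx f k) p :=
    (contDiffAt_pdx hf (m := 1) (by norm_num) k).differentiableAt one_ne_zero
  have hv (k : Fin n) : DifferentiableAt ℝ (pdy f k) p :=
    (contDiffAt_pdy hf (m := 1) (by norm_num) k).differentiableAt one_ne_zero
  have pdy_summand (k : Fin n) :
      pdy (fun q => q.2 k * pdx f k q - 2 * G k q * pdy f k q) j p =
        p.2 k * pdx (pdy f j) k p - 2 * G k p * pdy (pdy f j) k p +
          pdx f k p * (Pi.single j 1 : Fin n → ℝ) k - 2 * (Ncoef G k j p * pdy f k p) := by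
    rw [pdy_sub ((hy k).fun_mul (hx k)) (((hG k).const_mul 2).fun_mul (hv k)),
      pdy_mul (hy k) (hx k),
      pdy_mul ((hG k).const_mul 2) (hv k), pdy_const_mul 2 (hG k), pdy_snd_apply,
      pdy_pdx_comm hf, pdy_pdy_comm hf, Ncoef]
    ring
  have pdx_eq_sum : pdx f j p = ∑ k, pdx f k p * (Pi.single j 1 : Fin n → ℝ) k := by
    simp [Pi.single_apply]
  calc pdy (Sop G f) j p
      = ∑ k, pdy (fun q => q.2 k * pdx f k q - 2 * G k q * pdy f k q) j p :=
        pdy_sum (fun k _ => ((hy k).mul (hx k)).sub (((hG k).const_mul 2).mul (hv k))) j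
    _ = Sop G (pdy f j) p + pdx f j p - 2 * ∑ k, Ncoef G k j p * pdy f k p := by
        simp only [pdy_summand, Finset.sum_add_distrib, Finset.sum_sub_distrib, pdx_eq_sum, Sop,
          Finset.mul_sum]

lemma pdy_el (hG : ∀ k, ContDiffAt ℝ 1 (G k) p) (hf : ContDiffAt ℝ 3 f p) (i j : Fin n) :
    pdy (EL G f i) j p = Sop G (pdyy f j i) p - 2 * (∑ k, Ncoef G k j p * pdyy f k i p)
      + (pdx (pdy f i) j p - pdx (pdy f j) i p) := by
  have hfi : ContDiffAt ℝ 2 (pdy f i) p := contDiffAt_pdy hf (by norm_num) i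
  have hS : DifferentiableAt ℝ (Sop G (pdy f i)) p :=
    (contDiffAt_sop hG hfi (by norm_num)).differentiableAt one_ne_zero
  have hx : DifferentiableAt ℝ (pdx f i) p :=
    (contDiffAt_pdx hf (m := 2) (by norm_num) i).differentiableAt two_ne_zero
  calc pdy (EL G f i) j p = pdy (Sop G (pdy f i)) j p - pdy (pdx f i) j p := pdy_sub hS hx j
    _ = _ := by
      rw [pdy_sop (fun k => (hG k).differentiableAt one_ne_zero) hfi,
        pdy_pdx_comm (hf.of_le (by norm_num))]
      simp only [pdyy]
      ring

lemma pdy_el_add_pdy_el (hG : ∀ k, ContDiffAt ℝ 1 (G k) p) (hf : ContDiffAt ℝ 3 f p)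
    (i j : Fin n) :
    pdy (EL G f i) j p + pdy (EL G f j) i p = 2 * nablaT G (pdyy f) i j p := by
  have hf2 : ContDiffAt ℝ 2 f p := hf.of_le (by norm_num)
  have sop_symm : Sop G (pdyy f j i) p = Sop G (pdyy f i j) p :=
    sop_congr ((hf2.eventually (by simp)).mono fun q hq => pdy_pdy_comm hq i j)
  have pdyy_symm (k : Fin n) : pdyy f i k p = pdyy f k i p := pdy_pdy_comm hf2 k i
  rw [pdy_el hG hf i j, pdy_el hG hf j i, nablaT, sop_symm, Finset.sum_add_distrib]
  simp only [pdyy_symm]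
  ring

end EulerLagrange

section Homogeneity

variable {n : ℕ} {U : Set (Fin n → ℝ)} {f g : Pt n → ℝ} {p : Pt n} {k l : ℤ}

lemma isOpen_omegaSet (hU : IsOpen U) : IsOpen (OmegaSet U) :=
  (hU.preimage continuous_fst).inter (isOpen_compl_singleton.preimage continuous_snd)

lemma contDiffAt_of_mem_omegaSet (hU : IsOpen U) {m : WithTop ℕ∞}
    (hf : ContDiffOn ℝ m f (OmegaSet U)) (hp : p ∈ OmegaSet U) : ContDiffAt ℝ m f p :=
  hf.contDiffAt ((isOpen_omegaSet hU).mem_nhds hp)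

lemma posHomog_snd_apply (i : Fin n) : PosHomog U 1 (fun p => p.2 i) := by
  intro L _ p _
  simp

lemma PosHomog.sub (hf : PosHomog U k f) (hg : PosHomog U k g) :
    PosHomog U k (fun p => f p - g p) := by
  intro L hL p hp
  simp only [hf L hL p hp, hg L hL p hp, mul_sub]

lemma PosHomog.mul (hf : PosHomog U k f) (hg : PosHomog U l g) :
    PosHomog U (k + l) (fun p => f p * g p) := by
  intro L hL p hp
  simp only [hf L hL p hp, hg L hL p hp, zpow_add₀ hL.ne']
  ring

lemma PosHomog.const_mul (c : ℝ) (hf : PosHomog U k f) : PosHomog U k (fun p => c * f p) := by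
  intro L hL p hp
  simp only [hf L hL p hp, mul_left_comm]

lemma posHomog_sum {ι : Type*} {s : Finset ι} {h : ι → Pt n → ℝ}
    (hh : ∀ i ∈ s, PosHomog U k (h i)) : PosHomog U k (fun p => ∑ i ∈ s, h i p) := by
  intro L hL p hp
  rw [Finset.mul_sum]
  exact Finset.sum_congr rfl fun i hi => hh i hi L hL p hp

lemma fderiv_smul_fibre (hU : IsOpen U) (hf : DifferentiableOn ℝ f (OmegaSet U))
    (hk : PosHomog U k f) {L : ℝ} (hL : 0 < L) (hp : p ∈ OmegaSet U) (u v : Fin n → ℝ) :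
    fderiv ℝ f (p.1, L • p.2) (u, L • v) = L ^ k * fderiv ℝ f p (u, v) := by
  have hΩ {q : Pt n} (hq : q ∈ OmegaSet U) : OmegaSet U ∈ nhds q :=
    (isOpen_omegaSet hU).mem_nhds hq
  let dilation : Pt n →L[ℝ] Pt n := (ContinuousLinearMap.fst ℝ _ _).prod
    (L • ContinuousLinearMap.snd ℝ (Fin n → ℝ) (Fin n → ℝ))
  have hmem : dilation p ∈ OmegaSet U := ⟨hp.1, smul_ne_zero hL.ne' hp.2⟩
  have h_comp : HasFDerivAt (fun q => f (dilation q)) ((fderiv ℝ f (dilation p)).comp dilation) p :=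
    (hf.differentiableAt (hΩ hmem)).hasFDerivAt.comp p dilation.hasFDerivAt
  have h_scale : HasFDerivAt (fun q => f (dilation q)) (L ^ k • fderiv ℝ f p) p :=
    ((hf.differentiableAt (hΩ hp)).hasFDerivAt.const_mul (L ^ k)).congr_of_eventuallyEq
      (Filter.eventuallyEq_of_mem (hΩ hp) (hk L hL))
  exact DFunLike.congr_fun (h_comp.unique h_scale) (u, v)

lemma posHomog_pdx (hU : IsOpen U) (hf : DifferentiableOn ℝ f (OmegaSet U))
    (hk : PosHomog U k f) (i : Fin n) : PosHomog U k (pdx f i) := by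
  intro L hL p hp
  simpa [pdx] using fderiv_smul_fibre hU hf hk hL hp (Pi.single i 1) 0

lemma posHomog_pdy (hU : IsOpen U) (hf : DifferentiableOn ℝ f (OmegaSet U))
    (hk : PosHomog U k f) (i : Fin n) : PosHomog U (k - 1) (pdy f i) := by
  intro L hL p hp
  have h := fderiv_smul_fibre hU hf hk hL hp 0 (Pi.single i 1)
  have h_dir : ((0, L • Pi.single i 1) : Pt n) = L • (0, Pi.single i 1) := by simp
  rw [h_dir, map_smul, smul_eq_mul] at h
  rw [zpow_sub_one₀ hL.ne', mul_right_comm, eq_mul_inv_iff_mul_eq₀ hL.ne', mul_comm]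
  exact h

lemma posHomog_sop {G : Fin n → Pt n → ℝ} (hU : IsOpen U) (hG : ∀ i, PosHomog U 2 (G i))
    (hf : DifferentiableOn ℝ f (OmegaSet U)) (hk : PosHomog U k f) :
    PosHomog U (k + 1) (Sop G f) := by
  refine posHomog_sum fun i _ => PosHomog.sub ?_ ?_
  · simpa only [add_comm] using (posHomog_snd_apply i).mul (posHomog_pdx hU hf hk i)
  · convert ((hG i).const_mul 2).mul (posHomog_pdy hU hf hk i) using 1
    ring

lemma posHomog_el {G : Fin n → Pt n → ℝ} (hU : IsOpen U) (hG : ∀ i, PosHomog U 2 (G i))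
    (hf : ContDiffOn ℝ 2 f (OmegaSet U)) (hk : PosHomog U k f) (i : Fin n) :
    PosHomog U k (EL G f i) := by
  have hf1 : DifferentiableOn ℝ f (OmegaSet U) := hf.differentiableOn two_ne_zero
  have hpdy : DifferentiableOn ℝ (pdy f i) (OmegaSet U) := by
    intro p hp
    have hpdy_p : ContDiffAt ℝ 1 (pdy f i) p :=
      contDiffAt_pdy (contDiffAt_of_mem_omegaSet hU hf hp) (by norm_num) i
    exact (hpdy_p.differentiableAt one_ne_zero).differentiableWithinAt
  have h := posHomog_sop hU hG hpdy (posHomog_pdy hU hf1 hk i)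
  rw [sub_add_cancel] at h
  exact h.sub (posHomog_pdx hU hf1 hk i)

lemma PosHomog.sum_pdy_mul_snd (hk : PosHomog U k f) (hf : DifferentiableAt ℝ f p)
    (hp : p ∈ OmegaSet U) : ∑ j, pdy f j p * p.2 j = k * f p := by
  have h_ray : HasDerivAt (fun t : ℝ => t • p.2) p.2 1 := by
    simpa using (hasDerivAt_id (1 : ℝ)).smul_const p.2
  have h_chain : HasDerivAt (fun t : ℝ => f (p.1, t • p.2)) (fderiv ℝ f p (0, p.2)) 1 :=
    HasFDerivAt.comp_hasDerivAt_of_eq (l := fun y => f (p.1, y)) (1 : ℝ) (hasFDerivAt_fibre hf)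
      h_ray (one_smul ℝ p.2).symm
  have h_pow : HasDerivAt (fun t : ℝ => t ^ k * f p) (k * f p) 1 := by
    simpa using (hasDerivAt_zpow k (1 : ℝ) (.inl one_ne_zero)).mul_const (f p)
  have h_eq : (fun t : ℝ => f (p.1, t • p.2)) =ᶠ[nhds 1] fun t => t ^ k * f p := by
    filter_upwards [lt_mem_nhds one_pos] with t ht using hk t ht p hp
  rw [← fderiv_fibre_apply]
  exact h_chain.unique (h_pow.congr_of_eventuallyEq h_eq)

end Homogeneity

section BasicTwoForm

variable {n : ℕ} {U : Set (Fin n → ℝ)}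

/-- The semi-basic 1-form `Σ_i E_i dx^i` on `Ω` is the contraction `i_S ω` of a spray with a smooth
basic 2-form `ω` on `U`. Since the `x`-part of a spray is `y`, the contraction does not depend on
the spray. Skewness of `ω` is imposed on all of `ℝⁿ`, smoothness and the identity over `U` only. -/
def IsBasicTwoFormContraction (U : Set (Fin n → ℝ)) (E : Fin n → Pt n → ℝ) : Prop :=
  ∃ ω : Fin n → Fin n → (Fin n → ℝ) → ℝ,
    (∀ i j, ContDiffOn ℝ (⊤ : ℕ∞) (ω i j) U) ∧
    (∀ i j x, ω i j x = -ω j i x) ∧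
    (∀ i, ∀ p ∈ OmegaSet U, E i p = ∑ j, ω i j p.1 * p.2 j)

/-- The fibre Jacobian `∂E_i/∂y^j` is skew-symmetric on `Ω`. -/
def HasSkewFibreJacobian (U : Set (Fin n → ℝ)) (E : Fin n → Pt n → ℝ) : Prop :=
  ∀ i j, ∀ p ∈ OmegaSet U, pdy (E i) j p = -pdy (E j) i p

lemma pdy_eq_of_eq_sum {f : Pt n → ℝ} {p : Pt n} {a : Fin n → ℝ} (hf : DifferentiableAt ℝ f p)
    (h : ∀ᶠ y in nhds p.2, f (p.1, y) = ∑ j, a j * y j) (j : Fin n) : pdy f j p = a j := by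
  let linear : (Fin n → ℝ) →L[ℝ] ℝ := ∑ k, a k • ContinuousLinearMap.proj k
  have h_linear : (fun y => f (p.1, y)) =ᶠ[nhds p.2] linear := by
    filter_upwards [h] with y hy
    simpa [linear] using hy
  have h_fderiv := (hasFDerivAt_fibre hf).unique
    (linear.hasFDerivAt.congr_of_eventuallyEq h_linear)
  simpa [linear, pdy, Pi.single_apply] using DFunLike.congr_fun h_fderiv (Pi.single j 1)

lemma eq_of_pdy_eq_zero [Nontrivial (Fin n)] {f : Pt n → ℝ} {x y z : Fin n → ℝ}
    (hf : ∀ w ≠ 0, DifferentiableAt ℝ f (x, w)) (h0 : ∀ w ≠ 0, ∀ k, pdy f k (x, w) = 0)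
    (hy : y ≠ 0) (hz : z ≠ 0) : f (x, y) = f (x, z) := by
  have h_conn : IsPreconnected ({0}ᶜ : Set (Fin n → ℝ)) := by
    refine (isConnected_compl_singleton_of_one_lt_rank ?_ 0).isPreconnected
    rw [rank_fin_fun]
    exact_mod_cast Fin.nontrivial_iff_two_le.mp ‹_›
  have h_fderiv (w : Fin n → ℝ) (hw : w ≠ 0) :
      HasFDerivAt (fun w => f (x, w)) (0 : (Fin n → ℝ) →L[ℝ] ℝ) w := by
    convert hasFDerivAt_fibre (hf w hw) using 1
    ext v : 1
    simp [fderiv_fibre_apply, h0 w hw]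
  exact isOpen_compl_singleton.is_const_of_fderiv_eq_zero h_conn
    (fun w hw => (h_fderiv w hw).differentiableAt.differentiableWithinAt)
    (fun w hw => (h_fderiv w hw).fderiv) hy hz

namespace HasSkewFibreJacobian

variable {E : Fin n → Pt n → ℝ}

lemma pdy_pdy_eq_zero (hskew : HasSkewFibreJacobian U E) (hU : IsOpen U)
    (hE : ∀ i, ContDiffOn ℝ 2 (E i) (OmegaSet U)) {p : Pt n} (hp : p ∈ OmegaSet U)
    (i j k : Fin n) : pdy (pdy (E i) j) k p = 0 := by
  refine eq_zero_of_skew_of_symm (T := fun i j k => pdy (pdy (E i) j) k p) (fun i j k => ?_)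
    (fun i j k => pdy_pdy_comm (contDiffAt_of_mem_omegaSet hU (hE i) hp) j k) i j k
  have h : pdy (E i) j =ᶠ[nhds p] fun q => -pdy (E j) i q :=
    Filter.eventuallyEq_of_mem ((isOpen_omegaSet hU).mem_nhds hp) (hskew i j)
  change fderiv ℝ (pdy (E i) j) p _ = -fderiv ℝ (pdy (E j) i) p _
  rw [h.fderiv_eq, fderiv_fun_neg, neg_apply]

lemma pdy_eq_pdy (hskew : HasSkewFibreJacobian U E) (hU : IsOpen U)
    (hE : ∀ i, ContDiffOn ℝ 2 (E i) (OmegaSet U)) {x y z : Fin n → ℝ} (hx : x ∈ U)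
    (hy : y ≠ 0) (hz : z ≠ 0) (i j : Fin n) : pdy (E i) j (x, y) = pdy (E i) j (x, z) := by
  rcases subsingleton_or_nontrivial (Fin n) with _ | _
  · obtain rfl : i = j := Subsingleton.elim i j
    rw [self_eq_neg.mp (hskew i i (x, y) ⟨hx, hy⟩), self_eq_neg.mp (hskew i i (x, z) ⟨hx, hz⟩)]
  · refine eq_of_pdy_eq_zero (fun w hw => ?_)
      (fun w hw k => hskew.pdy_pdy_eq_zero hU hE ⟨hx, hw⟩ i j k) hy hz
    exact (contDiffAt_pdy (contDiffAt_of_mem_omegaSet hU (hE i) ⟨hx, hw⟩) (m := 1)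
      (by norm_num) j).differentiableAt one_ne_zero

lemma isBasicTwoFormContraction (hskew : HasSkewFibreJacobian U E) (hU : IsOpen U)
    (hE : ∀ i, ContDiffOn ℝ (⊤ : ℕ∞) (E i) (OmegaSet U)) (hE1 : ∀ i, PosHomog U 1 (E i)) :
    IsBasicTwoFormContraction U E := by
  have one_ne (i : Fin n) : (1 : Fin n → ℝ) ≠ 0 := fun h => one_ne_zero (congrFun h i)
  have h_smooth (i j : Fin n) : ContDiffOn ℝ (⊤ : ℕ∞) (fun x => pdy (E i) j (x, 1)) U :=
    fun x hx => (ContDiffAt.comp x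
      (contDiffAt_pdy (contDiffAt_of_mem_omegaSet hU (hE i) ⟨hx, one_ne i⟩) (by simp) j)
      (contDiffAt_id.prodMk contDiffAt_const)).contDiffWithinAt
  -- Antisymmetrising the Jacobian makes `ω` skew outside `U` as well.
  refine ⟨fun i j x => (pdy (E i) j (x, 1) - pdy (E j) i (x, 1)) / 2,
    fun i j => ((h_smooth i j).sub (h_smooth j i)).div_const 2, fun i j x => by ring,
    fun i p hp => ?_⟩
  have h_const (j : Fin n) :
      pdy (E i) j p = (pdy (E i) j (p.1, 1) - pdy (E j) i (p.1, 1)) / 2 := by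
    have h_fibre : pdy (E i) j p = pdy (E i) j (p.1, 1) :=
      hskew.pdy_eq_pdy hU (fun i => contDiffOn_infty.mp (hE i) 2) hp.1 hp.2 (one_ne i) i j
    rw [h_fibre, hskew j i (p.1, 1) ⟨hp.1, one_ne i⟩]
    ring
  have hdiff : DifferentiableAt ℝ (E i) p :=
    (contDiffAt_of_mem_omegaSet hU (hE i) hp).differentiableAt (by simp)
  calc E i p = ∑ j, pdy (E i) j p * p.2 j := by
        rw [(hE1 i).sum_pdy_mul_snd hdiff hp, Int.cast_one, one_mul]
    _ = _ := by simp only [h_const]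

end HasSkewFibreJacobian

lemma IsBasicTwoFormContraction.hasSkewFibreJacobian {E : Fin n → Pt n → ℝ}
    (h : IsBasicTwoFormContraction U E) (hE : ∀ i, ∀ p ∈ OmegaSet U, DifferentiableAt ℝ (E i) p) :
    HasSkewFibreJacobian U E := by
  obtain ⟨ω, -, hskew, hω⟩ := h
  have h_jacobian (i j : Fin n) {p : Pt n} (hp : p ∈ OmegaSet U) : pdy (E i) j p = ω i j p.1 :=
    pdy_eq_of_eq_sum (a := fun j => ω i j p.1) (hE i p hp)
      ((isOpen_ne.eventually_mem hp.2).mono fun y hy => hω i (p.1, y) ⟨hp.1, hy⟩) j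
  intro i j p hp
  rw [h_jacobian i j hp, h_jacobian j i hp, hskew]

lemma hasSkewFibreJacobian_el_iff {G : Fin n → Pt n → ℝ} {f : Pt n → ℝ} (hU : IsOpen U)
    (hG : ∀ i, ContDiffOn ℝ 1 (G i) (OmegaSet U)) (hf : ContDiffOn ℝ 3 f (OmegaSet U)) :
    HasSkewFibreJacobian U (EL G f) ↔
      ∀ i j, ∀ p ∈ OmegaSet U, nablaT G (pdyy f) i j p = 0 := by
  refine forall₄_congr fun i j p hp => ?_
  have h := pdy_el_add_pdy_el (fun k => contDiffAt_of_mem_omegaSet hU (hG k) hp)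
    (contDiffAt_of_mem_omegaSet hU hf hp) i j
  rw [eq_neg_iff_add_eq_zero, h, mul_eq_zero_iff_left two_ne_zero]

end BasicTwoForm

theorem statement9_general {n : ℕ} {U : Set (Fin n → ℝ)} (hU : IsOpen U)
    {G : Fin n → Pt n → ℝ} (hG : IsSpray U G)
    {f : Pt n → ℝ} (hf : ContDiffOn ℝ (⊤ : ℕ∞) f (OmegaSet U)) (hf1 : PosHomog U 1 f) :
    IsBasicTwoFormContraction U (EL G f) ↔
      ∀ i j, ∀ p ∈ OmegaSet U, nablaT G (pdyy f) i j p = 0 := by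
  have hE (i : Fin n) : ContDiffOn ℝ (⊤ : ℕ∞) (EL G f i) (OmegaSet U) := fun p hp =>
    (contDiffAt_el (fun k => contDiffAt_of_mem_omegaSet hU (hG k).1 hp)
      (contDiffAt_of_mem_omegaSet hU hf hp) (by simp) i).contDiffWithinAt
  have hE1 (i : Fin n) : PosHomog U 1 (EL G f i) :=
    posHomog_el hU (fun k => (hG k).2) (contDiffOn_infty.mp hf 2) hf1 i
  rw [← hasSkewFibreJacobian_el_iff hU (fun i => contDiffOn_infty.mp (hG i).1 1)
    (contDiffOn_infty.mp hf 3)]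
  exact ⟨fun h => h.hasSkewFibreJacobian fun i p hp =>
      (contDiffAt_of_mem_omegaSet hU (hE i) hp).differentiableAt (by simp),
    fun h => h.isBasicTwoFormContraction hU hE hE1⟩

/-- Theorem 3: a spray `S` is gyroscopic with respect to the Finsler structure
`F̃`, i.e. `δ_S F̃ = i_S ω` for some basic (skew-symmetric, `x`-dependent) 2-form `ω`,
iff the geodesic invariance `∇(∂²F̃/∂y^i∂y^j) = 0` holds on `Ω`. -/
theorem statement9 {n : ℕ} (hn : 2 ≤ n) (U : Set (Fin n → ℝ)) (hU : IsOpen U)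
    (G : Fin n → Pt n → ℝ) (hG : IsSpray U G)
    (Ft : Pt n → ℝ) (hFt : IsFinsler U Ft) :
    (∃ ω : Fin n → Fin n → (Fin n → ℝ) → ℝ,
        (∀ i j, ContDiffOn ℝ (⊤ : ℕ∞) (ω i j) U) ∧
        (∀ i j x, ω i j x = -ω j i x) ∧
        (∀ i, ∀ p ∈ OmegaSet U, EL G Ft i p = ∑ j, ω i j p.1 * p.2 j)) ↔
      (∀ i j, ∀ p ∈ OmegaSet U, nablaT G (pdyy Ft) i j p = 0) :=
  statement9_general hU hG hFt.1 hFt.2.2.1
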